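/- Assume condition (C) and (K,c) ∈ D₁. If μ_b(K,c) ≤ μ_f(K,c) (equivalently, by Proposition BMBF, c ≤ c_*(K), i.e. (K,c) ∈ D_{1,2} ∪ D_{1,3}), then for every μ ∈ ℝ the system (TV) has no solution with u > 0 satisfying (HO) with level ū = u₁. If instead μ_b(K,c) ≥ μ_f(K,c) (i.e. (K,c) ∈ D_{1,1} ∪ D_{1,3}), then for every μ ∈ ℝ the system (TV) has no solution with u > 0 satisfying (HO) with level ū = u₂. -/

import Mathlib

open Set Filter MeasureTheory

noncomputable section

namespace TrafficTW

/-- `f(u) = (K u - V(u) - c)/K`. -/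
def fTV (V : ℝ → ℝ) (K c u : ℝ) : ℝ := (K * u - V u - c) / K

/-- `f'(u) = (K - V'(u))/K`. -/
def fdTV (V' : ℝ → ℝ) (K u : ℝ) : ℝ := (K - V' u) / K

/-- `h(u,μ) = f'(u) + μ`. -/
def hTV (V' : ℝ → ℝ) (K μ u : ℝ) : ℝ := fdTV V' K u + μ

/-- `g₁(u) = 1/(τ κ(1/u))`. -/
def g1TV (κ : ℝ → ℝ) (τ u : ℝ) : ℝ := 1 / (τ * κ (1 / u))

/-- `g₂(u) = u/(2 τ κ(1/u))`. -/
def g2TV (κ : ℝ → ℝ) (τ u : ℝ) : ℝ := u / (2 * τ * κ (1 / u))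

/-- The traveling-wave system (TV): `u' = w`, `w' = g₁ f + g₂ h w`. -/
def IsTVSol (V V' κ : ℝ → ℝ) (τ K c μ : ℝ) (u w : ℝ → ℝ) : Prop :=
  (∀ z, HasDerivAt u (w z) z) ∧
  (∀ z, HasDerivAt w
    (g1TV κ τ (u z) * fTV V K c (u z) + g2TV κ τ (u z) * hTV V' K μ (u z) * w z) z)

/-- Assumption (A1), where `V'` and `V''` are the first and second derivatives of `V`. -/
def A1 (V V' V'' : ℝ → ℝ) (UM : ℝ) : Prop :=
  (∀ u ∈ Ici (0:ℝ), HasDerivWithinAt V (V' u) (Ici 0) u) ∧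
  ContinuousOn V' (Ici 0) ∧
  (∀ u ∈ Ioi (0:ℝ), HasDerivAt V' (V'' u) u) ∧
  ContinuousOn V'' (Ioi 0) ∧
  (∀ u, 0 < u → 0 < V' u) ∧ (∃ M, ∀ u, 0 < u → V' u ≤ M) ∧
  Tendsto V' atTop (nhds 0) ∧
  0 < UM ∧ (∀ u, 0 < u → V' u ≤ V' UM) ∧
  (∀ u, 0 < u → (V'' u = 0 ↔ u = UM))

/-- Assumption (A2). -/
def A2 (κ : ℝ → ℝ) : Prop :=
  ContDiffOn ℝ 1 κ (Ioi 0) ∧ ∀ ρ, 0 < ρ → 0 < κ ρ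

/-- `c₀ = -V(0)`. -/
def c0v (V : ℝ → ℝ) : ℝ := - V 0

/-- `c_M(K) = K u_M(K) - V(u_M(K))`, where `uMx` is the function `K ↦ u_M(K)`. -/
def cMf (V : ℝ → ℝ) (uMx : ℝ → ℝ) (K : ℝ) : ℝ := K * uMx K - V (uMx K)

/-- `c_m(K) = K u_m(K) - V(u_m(K))`, where `umx` is the function `K ↦ u_m(K)`. -/
def cmf (V : ℝ → ℝ) (umx : ℝ → ℝ) (K : ℝ) : ℝ := K * umx K - V (umx K)

/-- `c₁(K) = max (c₀, c_m(K))`. -/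
def c1f (V : ℝ → ℝ) (umx : ℝ → ℝ) (K : ℝ) : ℝ := max (c0v V) (cmf V umx K)

/-- `uMx K = u_M(K)` is the unique local maximum point of `u ↦ K u - V(u)`, characterized
by `u_M(K) ∈ (0, U_M)` and `V'(u_M(K)) = K`, for `K ∈ (K₀, K_M)`. -/
def UMaxHyp (V' : ℝ → ℝ) (UM : ℝ) (uMx : ℝ → ℝ) : Prop :=
  ∀ K, V' 0 < K → K < V' UM → uMx K ∈ Ioo 0 UM ∧ V' (uMx K) = K

/-- `umx K = u_m(K)` is the unique local minimum point of `u ↦ K u - V(u)`, characterized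
by `u_m(K) ∈ (U_M, ∞)` and `V'(u_m(K)) = K`, for `K ∈ (0, K_M)`. -/
def UMinHyp (V' : ℝ → ℝ) (UM : ℝ) (umx : ℝ → ℝ) : Prop :=
  ∀ K, 0 < K → K < V' UM → UM < umx K ∧ V' (umx K) = K

/-- Characterization of `K₁ ∈ (K₀, K_M)`: `c_m(K) < c₀` for `K < K₁` and `c_m(K) > c₀`
for `K > K₁`. -/
def K1Hyp (V V' : ℝ → ℝ) (UM : ℝ) (umx : ℝ → ℝ) (K₁ : ℝ) : Prop :=
  V' 0 < K₁ ∧ K₁ < V' UM ∧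
  (∀ K, 0 < K → K < K₁ → cmf V umx K < c0v V) ∧
  cmf V umx K₁ = c0v V ∧
  (∀ K, K₁ < K → K < V' UM → c0v V < cmf V umx K)

/-- The parameter region `D₁`. -/
def D1 (V V' : ℝ → ℝ) (UM : ℝ) (uMx umx : ℝ → ℝ) : Set (ℝ × ℝ) :=
  {p | V' 0 < p.1 ∧ p.1 < V' UM ∧ c1f V umx p.1 < p.2 ∧ p.2 < cMf V uMx p.1}

/-- The parameter region `D₂`. -/
def D2 (V V' : ℝ → ℝ) (umx : ℝ → ℝ) (K₁ : ℝ) : Set (ℝ × ℝ) :=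
  {p | (V' 0 < p.1 ∧ p.1 < K₁ ∧ p.2 = c0v V) ∨
       (0 < p.1 ∧ p.1 < K₁ ∧ cmf V umx p.1 < p.2 ∧ p.2 < c0v V)}

/-- For `(K,c) ∈ D₁`: `u₁ < u₀ < u₂` are the exactly three positive zeros of `f`. -/
def ZerosD1 (V : ℝ → ℝ) (K c u1 u0 u2 : ℝ) : Prop :=
  0 < u1 ∧ u1 < u0 ∧ u0 < u2 ∧
  fTV V K c u1 = 0 ∧ fTV V K c u0 = 0 ∧ fTV V K c u2 = 0 ∧
  ∀ u, 0 < u → fTV V K c u = 0 → u = u1 ∨ u = u0 ∨ u = u2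

/-- For `(K,c) ∈ D₂`: `u₀ < u₂` are the exactly two positive zeros of `f`. -/
def ZerosD2 (V : ℝ → ℝ) (K c u0 u2 : ℝ) : Prop :=
  0 < u0 ∧ u0 < u2 ∧ fTV V K c u0 = 0 ∧ fTV V K c u2 = 0 ∧
  ∀ u, 0 < u → fTV V K c u = 0 → u = u0 ∨ u = u2

/-- Condition (HE1). -/
def HE1 (u1 u2 : ℝ) (u w : ℝ → ℝ) : Prop :=
  Tendsto u atBot (nhds u1) ∧ Tendsto u atTop (nhds u2) ∧
  Tendsto w atBot (nhds 0) ∧ Tendsto w atTop (nhds 0) ∧ ∀ z, 0 < w z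

/-- Condition (HE2). -/
def HE2 (u1 u2 : ℝ) (u w : ℝ → ℝ) : Prop :=
  Tendsto u atBot (nhds u2) ∧ Tendsto u atTop (nhds u1) ∧
  Tendsto w atBot (nhds 0) ∧ Tendsto w atTop (nhds 0) ∧ ∀ z, w z < 0

/-- Condition (HO) with level `ub`. -/
def HO (ub : ℝ) (u w : ℝ → ℝ) : Prop :=
  Tendsto u atBot (nhds ub) ∧ Tendsto u atTop (nhds ub) ∧
  Tendsto w atBot (nhds 0) ∧ Tendsto w atTop (nhds 0) ∧
  ¬ (∀ z, u z = ub ∧ w z = 0)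

/-- (TV) with parameter `μ` has a positive solution satisfying (HE1). -/
def HasHE1 (V V' κ : ℝ → ℝ) (τ K c μ u1 u2 : ℝ) : Prop :=
  ∃ u w : ℝ → ℝ, IsTVSol V V' κ τ K c μ u w ∧ (∀ z, 0 < u z) ∧ HE1 u1 u2 u w

/-- (TV) with parameter `μ` has a positive solution satisfying (HE2). -/
def HasHE2 (V V' κ : ℝ → ℝ) (τ K c μ u1 u2 : ℝ) : Prop :=
  ∃ u w : ℝ → ℝ, IsTVSol V V' κ τ K c μ u w ∧ (∀ z, 0 < u z) ∧ HE2 u1 u2 u w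

/-- (TV) with parameter `μ` has a positive solution satisfying (HO) with level `ub`. -/
def HasHO (V V' κ : ℝ → ℝ) (τ K c μ ub : ℝ) : Prop :=
  ∃ u w : ℝ → ℝ, IsTVSol V V' κ τ K c μ u w ∧ (∀ z, 0 < u z) ∧ HO ub u w

/-- Condition (H): `∫₁^∞ dρ/(ρ³ κ(ρ)) = ∞`. -/
def CondH (κ : ℝ → ℝ) : Prop :=
  ¬ IntegrableOn (fun ρ => 1 / (ρ ^ 3 * κ ρ)) (Ioi 1)

/-- Condition (C). -/
def CondC (V' κ : ℝ → ℝ) (UM K₁ K : ℝ) : Prop :=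
  (K₁ < K ∧ K < V' UM) ∨ (CondH κ ∧ V' 0 < K ∧ K ≤ K₁)

/-- Periodic solution. -/
def IsPeriodicSol (u w : ℝ → ℝ) : Prop :=
  ∃ Z, 0 < Z ∧ ∀ z, u (z + Z) = u z ∧ w (z + Z) = w z

/-- Nonconstant pair of functions. -/
def Nonconst (u w : ℝ → ℝ) : Prop := ∃ z, u z ≠ u 0 ∨ w z ≠ w 0

/-- Discriminant of the Jacobian at an equilibrium `(u,0)`. -/
def discTV (V' κ : ℝ → ℝ) (τ K u μ : ℝ) : ℝ :=
  (g2TV κ τ u) ^ 2 * (hTV V' K μ u) ^ 2 + 4 * g1TV κ τ u * fdTV V' K u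

/-- The eigenvalue `λ₊(u)`. -/
def lamP (V' κ : ℝ → ℝ) (τ K u μ : ℝ) : ℝ :=
  (g2TV κ τ u * hTV V' K μ u + Real.sqrt (discTV V' κ τ K u μ)) / 2

/-- The eigenvalue `λ₋(u)`. -/
def lamM (V' κ : ℝ → ℝ) (τ K u μ : ℝ) : ℝ :=
  (g2TV κ τ u * hTV V' K μ u - Real.sqrt (discTV V' κ τ K u μ)) / 2

/-- `Z` is the minimal period of `(u,w)`. -/
def IsMinPeriod (u w : ℝ → ℝ) (Z : ℝ) : Prop :=
  0 < Z ∧ (∀ z, u (z + Z) = u z ∧ w (z + Z) = w z) ∧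
  ∀ Z', 0 < Z' → (∀ z, u (z + Z') = u z ∧ w (z + Z') = w z) → Z ≤ Z'

/-!
Positive solutions of (TV) solve a Liénard equation `u'' = F(u) + G(u) u'` whose force `F` does not
depend on `μ` and is bistable, while `G` increases with `μ`. A homoclinic orbit at `u₁` stays in
`(u₁, u₂)`, leaves with `w > 0` and must later hit `w = 0`, whereas an increasing front is a
positive graph over all of `(u₁, u₂)`. Run both orbits with synchronised `u`: if `G` is at least the
front's, the height `D` of the homoclinic orbit above the front satisfies `D' + k D ≥ 0` up to that
hit, with `k > 0` near `-∞`, so from `D(-∞) = 0` it follows that `D ≥ 0` at the hit. There, however,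
`w = 0` lies strictly below the front. Hence `μ < μ_b`. Reversing time gives `μ > μ_f` from the
decreasing front, and the reflection `u ↦ -u` exchanges `u₁` with `u₂`.
-/

open scoped Pointwise Topology

/-! ### Real analysis -/

theorem eq_zero_of_hasDerivAt_clm {E : Type*} [NormedAddCommGroup E] [NormedSpace ℝ E]
    {A : ℝ → E →L[ℝ] E} {y : ℝ → E} {t₀ : ℝ} (hA : Continuous A)
    (hy : ∀ t, HasDerivAt y (A t (y t)) t) (h₀ : y t₀ = 0) (t : ℝ) : y t = 0 := by
  obtain ⟨a, ha⟩ := exists_lt (min t t₀)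
  obtain ⟨b, hb⟩ := exists_gt (max t t₀)
  obtain ⟨hat, hat₀⟩ := lt_min_iff.1 ha
  obtain ⟨htb, ht₀b⟩ := max_lt_iff.1 hb
  obtain ⟨M, hM⟩ := isCompact_Icc.exists_bound_of_continuousOn (hA.continuousOn (s := Icc a b))
  have hlip : ∀ s ∈ Ioo a b, LipschitzOnWith M.toNNReal (fun x => A s x) univ := fun s hs =>
    ((A s).lipschitz.weaken (NNReal.le_toNNReal_of_coe_le
      (hM s (Ioo_subset_Icc_self hs)))).lipschitzOnWith
  have hcont : Continuous y := continuous_iff_continuousAt.2 fun s => (hy s).continuousAt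
  exact ODE_solution_unique_of_mem_Icc (g := fun _ => 0) hlip ⟨hat₀, ht₀b⟩ hcont.continuousOn
    (fun s _ => hy s) (fun _ _ => mem_univ _) continuousOn_const
    (fun s _ => by simpa using hasDerivAt_const s (0 : E)) (fun _ _ => mem_univ _) h₀
    ⟨hat.le, htb.le⟩

theorem deriv_nonpos_of_isLocalMax {u w : ℝ → ℝ} {w' x : ℝ} (hu : ∀ z, HasDerivAt u (w z) z)
    (hw : HasDerivAt w w' x) (hmax : IsLocalMax u x) : w' ≤ 0 := by
  by_contra! hpos
  have hderiv : deriv u = w := funext fun z => (hu z).deriv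
  have hmin : IsLocalMin u x :=
    isLocalMin_of_deriv_deriv_pos (by rwa [hderiv, hw.deriv]) hmax.deriv_eq_zero
      (hu x).continuousAt
  have hconst : u =ᶠ[𝓝 x] fun _ => u x := by
    filter_upwards [hmax, hmin] with y hle hge using le_antisymm hle hge
  have hw0 : w =ᶠ[𝓝 x] fun _ => 0 := by simpa [hderiv] using hconst.deriv
  exact hpos.ne (((hasDerivAt_const x (0 : ℝ)).congr_of_eventuallyEq hw0).unique hw)

theorem deriv_nonneg_of_isLocalMin {u w : ℝ → ℝ} {w' x : ℝ} (hu : ∀ z, HasDerivAt u (w z) z)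
    (hw : HasDerivAt w w' x) (hmin : IsLocalMin u x) : 0 ≤ w' :=
  neg_nonpos.1 (deriv_nonpos_of_isLocalMax (fun z => (hu z).neg) hw.neg hmin.neg)

theorem neg_of_deriv_add_mul_nonneg {D D' k : ℝ → ℝ} {a : ℝ} (hk : Continuous k)
    (hD : ∀ z, HasDerivAt D (D' z) z) (hD' : ∀ z < a, 0 ≤ D' z + k z * D z) (ha : D a < 0) :
    ∀ z ≤ a, D z < 0 := by
  let P : ℝ → ℝ := fun z => ∫ t in a..z, k t
  have hderiv (z : ℝ) :
      HasDerivAt (fun z => D z * Real.exp (P z)) ((D' z + k z * D z) * Real.exp (P z)) z :=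
    ((hD z).mul (hk.integral_hasStrictDerivAt a z).hasDerivAt.exp).congr_deriv (by ring)
  have hmono : MonotoneOn (fun z => D z * Real.exp (P z)) (Iic a) := by
    refine monotoneOn_of_hasDerivWithinAt_nonneg (convex_Iic a)
      (fun z _ => (hderiv z).continuousAt.continuousWithinAt)
      (fun z _ => (hderiv z).hasDerivWithinAt) fun z hz => ?_
    rw [interior_Iic] at hz
    exact mul_nonneg (hD' z hz) (Real.exp_pos _).le
  intro z hz
  have hle : D z * Real.exp (P z) ≤ D a * Real.exp (P a) := hmono hz self_mem_Iic hz
  exact neg_of_mul_neg_left (hle.trans_lt (mul_neg_of_neg_of_pos ha (Real.exp_pos _)))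
    (Real.exp_pos _).le

theorem nonneg_of_deriv_add_mul_nonneg {D D' k : ℝ → ℝ} {a : ℝ} (hk : Continuous k)
    (hk' : ∀ᶠ z in atBot, 0 ≤ k z) (hD : ∀ z, HasDerivAt D (D' z) z)
    (hD' : ∀ z < a, 0 ≤ D' z + k z * D z) (hbot : Tendsto D atBot (𝓝 0)) : 0 ≤ D a := by
  by_contra! ha
  have hneg : ∀ z ≤ a, D z < 0 := neg_of_deriv_add_mul_nonneg hk hD hD' ha
  obtain ⟨Z, hZ⟩ := eventually_atBot.1 (hk'.and (eventually_lt_atBot a))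
  have hmono : MonotoneOn D (Iic Z) := by
    refine monotoneOn_of_hasDerivWithinAt_nonneg (convex_Iic Z)
      (fun z _ => (hD z).continuousAt.continuousWithinAt)
      (fun z _ => (hD z).hasDerivWithinAt) fun z hz => ?_
    obtain ⟨hkz, hza⟩ := hZ z (interior_subset (s := Iic Z) hz)
    have hkD : k z * D z ≤ 0 := mul_nonpos_of_nonneg_of_nonpos hkz (hneg z hza.le).le
    linarith [hD' z hza]
  have hDZ : 0 ≤ D Z := by
    refine le_of_tendsto hbot ?_
    filter_upwards [eventually_le_atBot Z] with z hz using hmono hz self_mem_Iic hz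
  exact hDZ.not_gt (hneg Z (hZ Z le_rfl).2.le)

theorem exists_first_zero {w : ℝ → ℝ} {x : ℝ} (hw : Continuous w)
    (hbot : ∀ᶠ z in atBot, 0 < w z) (hx : w x = 0) : ∃ a, w a = 0 ∧ ∀ z < a, 0 < w z := by
  obtain ⟨Z, hZ⟩ := eventually_atBot.1 hbot
  have hbdd : BddBelow {z | w z ≤ 0} := ⟨Z, fun z hz => le_of_not_ge fun h => (hZ z h).not_ge hz⟩
  obtain ⟨ha, hleast⟩ := (isClosed_le hw continuous_const).isLeast_csInf ⟨x, hx.le⟩ hbdd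
  have hpos : ∀ z < sInf {z | w z ≤ 0}, 0 < w z := fun z hz =>
    lt_of_not_ge fun h => (hleast h).not_gt hz
  refine ⟨_, le_antisymm ha (ge_of_tendsto (hw.tendsto _ |>.mono_left nhdsWithin_le_nhds)
    (eventually_mem_nhdsWithin.mono fun z hz => (hpos z hz).le : ∀ᶠ z in 𝓝[<] _, _)), hpos⟩

theorem tendsto_atTop_of_le_deriv {f f' : ℝ → ℝ} {C : ℝ} (hC : 0 < C)
    (hf : ∀ᶠ x in atTop, HasDerivAt f (f' x) x) (hf' : ∀ᶠ x in atTop, C ≤ f' x) :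
    Tendsto f atTop atTop := by
  obtain ⟨R, hR⟩ := eventually_atTop.1 (hf.and hf')
  have hgrowth : ∀ x ≥ R, C * (x - R) + f R ≤ f x := fun x hx =>
    le_sub_iff_add_le.1 <| (convex_Ici R).mul_sub_le_image_sub_of_le_deriv
      (fun z hz => (hR z hz).1.continuousAt.continuousWithinAt)
      (fun z hz => (hR z (interior_subset hz)).1.differentiableAt.differentiableWithinAt)
      (fun z hz => (hR z (interior_subset hz)).1.deriv ▸ (hR z (interior_subset hz)).2)
      R self_mem_Ici x hx hx
  refine tendsto_atTop_mono' _ ((eventually_ge_atTop R).mono hgrowth) ?_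
  exact tendsto_atTop_add_const_right _ _
    ((tendsto_atTop_add_const_right _ (-R) tendsto_id).const_mul_atTop hC)

theorem range_eq_Ioo_of_strictMono {U : ℝ → ℝ} {l₁ l₂ : ℝ} (hU : Continuous U)
    (hmono : StrictMono U) (hbot : Tendsto U atBot (𝓝 l₁)) (htop : Tendsto U atTop (𝓝 l₂)) :
    range U = Ioo l₁ l₂ := by
  ext x
  constructor
  · rintro ⟨s, rfl⟩
    exact ⟨(hmono.monotone.le_of_tendsto hbot (s - 1)).trans_lt (hmono (by linarith)),
      (hmono (by linarith)).trans_le (hmono.monotone.ge_of_tendsto htop (s + 1))⟩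
  · rintro ⟨hx₁, hx₂⟩
    exact mem_range_of_exists_le_of_exists_ge hU (hbot.eventually_le_const hx₁).exists
      (htop.eventually_const_le hx₂).exists

theorem exists_reparametrization {u w U W : ℝ → ℝ} {l₁ l₂ : ℝ}
    (hu : ∀ z, HasDerivAt u (w z) z) (hmem : ∀ z, u z ∈ Ioo l₁ l₂)
    (hubot : Tendsto u atBot (𝓝 l₁)) (hU : ∀ z, HasDerivAt U (W z) z) (hW : ∀ z, 0 < W z)
    (hbot : Tendsto U atBot (𝓝 l₁)) (htop : Tendsto U atTop (𝓝 l₂)) :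
    ∃ s : ℝ → ℝ, (∀ z, U (s z) = u z) ∧ (∀ z, HasDerivAt s (w z / W (s z)) z) ∧
      Tendsto s atBot atBot := by
  have hUc : Continuous U := continuous_iff_continuousAt.2 fun z => (hU z).continuousAt
  have hmono : StrictMono U := strictMono_of_hasDerivAt_pos hU hW
  have hrange : range U = Ioo l₁ l₂ := range_eq_Ioo_of_strictMono hUc hmono hbot htop
  have hemb : Topology.IsOpenEmbedding U :=
    ⟨hmono.isEmbedding_of_ordConnected (hrange ▸ ordConnected_Ioo), hrange ▸ isOpen_Ioo⟩
  let e := hemb.toOpenPartialHomeomorph U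
  have htarget (z : ℝ) : u z ∈ e.target := by simpa [e, hrange] using hmem z
  have hUs (z : ℝ) : U (e.symm (u z)) = u z := e.right_inv (htarget z)
  refine ⟨fun z => e.symm (u z), hUs, fun z => ?_, tendsto_atBot.2 fun N => ?_⟩
  · exact ((e.hasDerivAt_symm (htarget z) (hW _).ne' (hU _)).comp z (hu z)).congr_deriv
      (by rw [div_eq_inv_mul])
  · have hN : l₁ < U N := (hrange ▸ mem_range_self N : U N ∈ Ioo l₁ l₂).1
    filter_upwards [hubot.eventually_le_const hN] with z hz
    exact hmono.le_iff_le.1 ((hUs z).trans_le hz)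

/-! ### Bistable nonlinearities -/

/-- A bistable nonlinearity on `I`: `F` vanishes at `a` and `d`, and is negative, positive,
negative, positive on the four successive pieces of `I` cut out by `a < b < d`. The value at the
middle point `b` is left free. -/
structure IsBistable (I : Set ℝ) (F : ℝ → ℝ) (a b d : ℝ) : Prop where
  left_lt : a < b
  lt_right : b < d
  left_mem : a ∈ I
  right_mem : d ∈ I
  left_eq_zero : F a = 0
  right_eq_zero : F d = 0
  neg_of_lt : ∀ x ∈ I, x < a → F x < 0
  pos_of_mem_Ioo : ∀ x ∈ Ioo a b, 0 < F x
  neg_of_mem_Ioo : ∀ x ∈ Ioo b d, F x < 0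
  pos_of_gt : ∀ x ∈ I, d < x → 0 < F x

theorem IsBistable.reflect {I : Set ℝ} {F : ℝ → ℝ} {a b d : ℝ} (hF : IsBistable I F a b d) :
    IsBistable (-I) (fun x => -F (-x)) (-d) (-b) (-a) where
  left_lt := neg_lt_neg hF.lt_right
  lt_right := neg_lt_neg hF.left_lt
  left_mem := by simpa using hF.right_mem
  right_mem := by simpa using hF.left_mem
  left_eq_zero := by simpa using hF.right_eq_zero
  right_eq_zero := by simpa using hF.left_eq_zero
  neg_of_lt x hx hlt := neg_neg_of_pos (hF.pos_of_gt (-x) hx (lt_neg.1 hlt))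
  pos_of_mem_Ioo x hx := neg_pos.2 (hF.neg_of_mem_Ioo (-x) ⟨lt_neg.1 hx.2, neg_lt.1 hx.1⟩)
  neg_of_mem_Ioo x hx := neg_neg_of_pos (hF.pos_of_mem_Ioo (-x) ⟨lt_neg.1 hx.2, neg_lt.1 hx.1⟩)
  pos_of_gt x hx hlt := neg_pos.2 (hF.neg_of_lt (-x) hx (neg_lt.1 hlt))

theorem IsBistable.pos_mul {I : Set ℝ} [I.OrdConnected] {F g : ℝ → ℝ} {a b d : ℝ}
    (hF : IsBistable I F a b d) (hg : ∀ x ∈ I, 0 < g x) :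
    IsBistable I (fun x => g x * F x) a b d where
  left_lt := hF.left_lt
  lt_right := hF.lt_right
  left_mem := hF.left_mem
  right_mem := hF.right_mem
  left_eq_zero := by simp [hF.left_eq_zero]
  right_eq_zero := by simp [hF.right_eq_zero]
  neg_of_lt x hx hlt := mul_neg_of_pos_of_neg (hg x hx) (hF.neg_of_lt x hx hlt)
  pos_of_mem_Ioo x hx := mul_pos
    (hg x (I.Icc_subset hF.left_mem hF.right_mem ⟨hx.1.le, (hx.2.trans hF.lt_right).le⟩))
    (hF.pos_of_mem_Ioo x hx)
  neg_of_mem_Ioo x hx := mul_neg_of_pos_of_neg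
    (hg x (I.Icc_subset hF.left_mem hF.right_mem ⟨(hF.left_lt.trans hx.1).le, hx.2.le⟩))
    (hF.neg_of_mem_Ioo x hx)
  pos_of_gt x hx hlt := mul_pos (hg x hx) (hF.pos_of_gt x hx hlt)

theorem isBistable_of_sign_changes {f : ℝ → ℝ} {l p q r a b d : ℝ} (hf : ContinuousOn f (Ici l))
    (hlp : l < p) (hpq : p < q) (hqr : q < r) (hfl : f l < 0) (hfp : 0 < f p) (hfq : f q < 0)
    (hfr : 0 < f r) (hab : a < b) (hbd : b < d)
    (hzero : ∀ x, l < x → f x = 0 → x = a ∨ x = b ∨ x = d) :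
    IsBistable (Ioi l) f a b d := by
  have hcont {x y : ℝ} (hx : l ≤ x) : ContinuousOn f (Icc x y) :=
    hf.mono fun _ ht => hx.trans ht.1
  obtain ⟨t₁, ⟨hlt₁, ht₁p⟩, hft₁⟩ := intermediate_value_Ioo hlp.le (hcont le_rfl) ⟨hfl, hfp⟩
  obtain ⟨t₂, ⟨hpt₂, ht₂q⟩, hft₂⟩ := intermediate_value_Ioo' hpq.le (hcont hlp.le) ⟨hfq, hfp⟩
  obtain ⟨t₃, ⟨hqt₃, ht₃r⟩, hft₃⟩ :=
    intermediate_value_Ioo hqr.le (hcont (hlp.trans hpq).le) ⟨hfq, hfr⟩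
  obtain ⟨rfl, rfl, rfl⟩ : t₁ = a ∧ t₂ = b ∧ t₃ = d := by
    have := hzero t₁ hlt₁ hft₁
    have := hzero t₂ (hlp.trans hpt₂) hft₂
    have := hzero t₃ (hlp.trans (hpq.trans hqt₃)) hft₃
    grind
  have hne (x : ℝ) (hx : l ≤ x) (h₁ : x ≠ t₁) (h₂ : x ≠ t₂) (h₃ : x ≠ t₃) : f x ≠ 0 := by
    rcases hx.eq_or_lt with rfl | hx
    · exact hfl.ne
    · exact fun h0 => by simpa [h₁, h₂, h₃] using hzero x hx h0
  refine ⟨hab, hbd, hlt₁, hlp.trans (hpq.trans hqt₃), hft₁, hft₃, fun x hx hlt => ?_,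
    fun x hx => ?_, fun x hx => ?_, fun x _ hlt => ?_⟩
  · exact isPreconnected_Ico.gt_of_ne (s := Ico l t₁) (hf.mono fun y hy => hy.1)
      (fun y hy => hne y hy.1 (by grind) (by grind) (by grind)) ⟨l, ⟨le_rfl, hlt₁⟩, hfl⟩
      ⟨(mem_Ioi.1 hx).le, hlt⟩
  · exact isPreconnected_Ioo.lt_of_ne (s := Ioo t₁ t₂)
      (hf.mono fun y hy => (hlt₁.trans hy.1).le)
      (fun y hy => hne y (by grind) (by grind) (by grind) (by grind)) ⟨p, ⟨ht₁p, hpt₂⟩, hfp⟩ hx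
  · exact isPreconnected_Ioo.gt_of_ne (s := Ioo t₂ t₃)
      (hf.mono fun y hy => (hlt₁.trans (hab.trans hy.1)).le)
      (fun y hy => hne y (by grind) (by grind) (by grind) (by grind)) ⟨q, ⟨ht₂q, hqt₃⟩, hfq⟩ hx
  · exact isPreconnected_Ioi.lt_of_ne (s := Ioi t₃)
      (hf.mono fun y hy => (hlt₁.trans (hab.trans (hbd.trans hy))).le)
      (fun y hy => hne y (by grind) (by grind) (by grind) (by grind)) ⟨r, ht₃r, hfr⟩ hlt

/-! ### Symmetries of connecting orbits -/

theorem HO.reverse {b : ℝ} {u w : ℝ → ℝ} (h : HO b u w) :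
    HO b (fun z => u (-z)) (fun z => -w (-z)) := by
  obtain ⟨hubot, hutop, hwbot, hwtop, hne⟩ := h
  refine ⟨hutop.comp tendsto_neg_atBot_atTop, hubot.comp tendsto_neg_atTop_atBot,
    by simpa using (hwtop.comp tendsto_neg_atBot_atTop).neg,
    by simpa using (hwbot.comp tendsto_neg_atTop_atBot).neg,
    fun hconst => hne fun z => by simpa using hconst (-z)⟩

theorem HO.reflect {b : ℝ} {u w : ℝ → ℝ} (h : HO b u w) :
    HO (-b) (fun z => -u z) (fun z => -w z) := by
  obtain ⟨hubot, hutop, hwbot, hwtop, hne⟩ := h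
  exact ⟨hubot.neg, hutop.neg, by simpa using hwbot.neg, by simpa using hwtop.neg,
    fun hconst => hne fun z => by simpa using hconst z⟩

theorem HE2.reverse {a b : ℝ} {u w : ℝ → ℝ} (h : HE2 a b u w) :
    HE1 a b (fun z => u (-z)) (fun z => -w (-z)) := by
  obtain ⟨hubot, hutop, hwbot, hwtop, hneg⟩ := h
  exact ⟨hutop.comp tendsto_neg_atBot_atTop, hubot.comp tendsto_neg_atTop_atBot,
    by simpa using (hwtop.comp tendsto_neg_atBot_atTop).neg,
    by simpa using (hwbot.comp tendsto_neg_atTop_atBot).neg, fun z => neg_pos.2 (hneg (-z))⟩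

theorem HE1.reflect {a b : ℝ} {u w : ℝ → ℝ} (h : HE1 a b u w) :
    HE2 (-b) (-a) (fun z => -u z) (fun z => -w z) := by
  obtain ⟨hubot, hutop, hwbot, hwtop, hpos⟩ := h
  exact ⟨hubot.neg, hutop.neg, by simpa using hwbot.neg, by simpa using hwtop.neg,
    fun z => neg_neg_of_pos (hpos z)⟩

theorem HE2.reflect {a b : ℝ} {u w : ℝ → ℝ} (h : HE2 a b u w) :
    HE1 (-b) (-a) (fun z => -u z) (fun z => -w z) := by
  obtain ⟨hubot, hutop, hwbot, hwtop, hneg⟩ := h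
  exact ⟨hubot.neg, hutop.neg, by simpa using hwbot.neg, by simpa using hwtop.neg,
    fun z => neg_pos.2 (hneg z)⟩

theorem HO.tendsto_cocompact {b : ℝ} {u w : ℝ → ℝ} (h : HO b u w) :
    Tendsto u (cocompact ℝ) (𝓝 b) := by
  rw [cocompact_eq_atBot_atTop]
  exact h.1.sup h.2.1

/-! ### Liénard equations -/

/-- A global solution of the Liénard equation `u'' = F(u) + G(u) u'`, written as the planar system
`u' = w`, `w' = F(u) + G(u) w`, with `u` taking values in `I`. -/
structure IsLienardSolution (I : Set ℝ) (F G u w : ℝ → ℝ) : Prop where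
  mem : ∀ z, u z ∈ I
  hasDerivAt_fst : ∀ z, HasDerivAt u (w z) z
  hasDerivAt_snd : ∀ z, HasDerivAt w (F (u z) + G (u z) * w z) z

namespace IsLienardSolution

variable {I : Set ℝ} {F G u w : ℝ → ℝ}

theorem continuous_fst (h : IsLienardSolution I F G u w) : Continuous u :=
  continuous_iff_continuousAt.2 fun z => (h.hasDerivAt_fst z).continuousAt

theorem continuous_snd (h : IsLienardSolution I F G u w) : Continuous w :=
  continuous_iff_continuousAt.2 fun z => (h.hasDerivAt_snd z).continuousAt

theorem reverse (h : IsLienardSolution I F G u w) :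
    IsLienardSolution I F (fun x => -G x) (fun z => u (-z)) (fun z => -w (-z)) where
  mem z := h.mem (-z)
  hasDerivAt_fst z := by
    simpa [Function.comp_def] using (h.hasDerivAt_fst (-z)).comp z (hasDerivAt_neg z)
  hasDerivAt_snd z :=
    ((h.hasDerivAt_snd (-z)).comp z (hasDerivAt_neg z)).neg.congr_deriv (by ring)

theorem reflect (h : IsLienardSolution I F G u w) :
    IsLienardSolution (-I) (fun x => -F (-x)) (fun x => G (-x)) (fun z => -u z)
      (fun z => -w z) where
  mem z := by simpa using h.mem z
  hasDerivAt_fst z := (h.hasDerivAt_fst z).neg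
  hasDerivAt_snd z := (h.hasDerivAt_snd z).neg.congr_deriv (by simp only [neg_neg]; ring)

/-- Dividing `F` by `x - b` exhibits `(u - b, w)` as a solution of a linear system with continuous
coefficients, so that no Lipschitz condition on `G` is needed. -/
theorem eq_equilibrium (h : IsLienardSolution I F G u w) (hI : IsOpen I)
    (hF : DifferentiableOn ℝ F I) (hG : ContinuousOn G I) {b z₀ : ℝ} (hFb : F b = 0)
    (hu : u z₀ = b) (hw : w z₀ = 0) (z : ℝ) : u z = b ∧ w z = 0 := by
  have hbI : I ∈ 𝓝 b := hI.mem_nhds (hu ▸ h.mem z₀)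
  have hslope : Continuous fun t => dslope F b (u t) :=
    ((continuousOn_dslope hbI).2 ⟨hF.continuousOn, hF.differentiableAt hbI⟩).comp_continuous
      h.continuous_fst h.mem
  have hdamp : Continuous fun t => G (u t) := hG.comp_continuous h.continuous_fst h.mem
  let π₁ := ContinuousLinearMap.fst ℝ ℝ ℝ
  let π₂ := ContinuousLinearMap.snd ℝ ℝ ℝ
  let ι₁ := ContinuousLinearMap.inl ℝ ℝ ℝ
  let ι₂ := ContinuousLinearMap.inr ℝ ℝ ℝ
  let A : ℝ → ℝ × ℝ →L[ℝ] ℝ × ℝ := fun t =>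
    ι₁ ∘L π₂ + dslope F b (u t) • ι₂ ∘L π₁ + G (u t) • ι₂ ∘L π₂
  have hA : Continuous A :=
    (continuous_const.add (hslope.smul continuous_const)).add (hdamp.smul continuous_const)
  have hlinear (t : ℝ) : HasDerivAt (fun t => (u t - b, w t)) (A t (u t - b, w t)) t := by
    have hFu : (u t - b) * dslope F b (u t) = F (u t) := by
      simpa [hFb] using sub_smul_dslope F b (u t)
    refine (((h.hasDerivAt_fst t).sub_const b).prodMk (h.hasDerivAt_snd t)).congr_deriv ?_
    simp [A, π₁, π₂, ι₁, ι₂, ← hFu, mul_comm]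
  simpa [sub_eq_zero] using
    eq_zero_of_hasDerivAt_clm (t₀ := z₀) hA hlinear (by simp [hu, hw]) z

theorem force_nonpos_of_isLocalMax (h : IsLienardSolution I F G u w) {x : ℝ}
    (hmax : IsLocalMax u x) : F (u x) ≤ 0 := by
  simpa [hmax.hasDerivAt_eq_zero (h.hasDerivAt_fst x)] using
    deriv_nonpos_of_isLocalMax h.hasDerivAt_fst (h.hasDerivAt_snd x) hmax

theorem force_nonneg_of_isLocalMin (h : IsLienardSolution I F G u w) {x : ℝ}
    (hmin : IsLocalMin u x) : 0 ≤ F (u x) := by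
  simpa [hmin.hasDerivAt_eq_zero (h.hasDerivAt_fst x)] using
    deriv_nonneg_of_isLocalMin h.hasDerivAt_fst (h.hasDerivAt_snd x) hmin

theorem snd_nonneg_of_force_pos (h : IsLienardSolution I F G u w) {x y : ℝ} (hxy : x ≤ y)
    (hF : ∀ z ∈ Ico x y, 0 < F (u z)) (hx : 0 ≤ w x) : 0 ≤ w y :=
  image_le_of_deriv_right_lt_deriv_boundary (f := fun _ => 0) (f' := fun _ => 0)
    continuousOn_const (fun z _ => hasDerivWithinAt_const z _ _) hx h.hasDerivAt_snd
    (fun z hz hwz => by simpa [← hwz] using hF z hz) ⟨hxy, le_rfl⟩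

theorem snd_pos_of_tendsto_atBot (h : IsLienardSolution I F G u w) {l Z : ℝ}
    (hbot : Tendsto u atBot (𝓝 l)) (hl : ∀ z, l < u z) (hF : ∀ z ≤ Z, 0 < F (u z)) :
    ∀ z < Z, 0 < w z := by
  have hnonneg : ∀ z ≤ Z, 0 ≤ w z := by
    intro y hy
    by_contra! hwy
    have hneg : ∀ z ≤ y, w z < 0 := fun z hz => lt_of_not_ge fun hwz => hwy.not_ge <|
      h.snd_nonneg_of_force_pos hz (fun t ht => hF t (ht.2.le.trans hy)) hwz
    have hanti : AntitoneOn u (Iic y) :=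
      antitoneOn_of_hasDerivWithinAt_nonpos (convex_Iic y) h.continuous_fst.continuousOn
        (fun z _ => (h.hasDerivAt_fst z).hasDerivWithinAt)
        (fun z hz => (hneg z (interior_subset (s := Iic y) hz)).le)
    refine (hl y).not_ge (ge_of_tendsto hbot ?_)
    filter_upwards [eventually_le_atBot y] with z hz using hanti hz self_mem_Iic hz
  intro z hz
  refine (hnonneg z hz.le).lt_of_ne' fun hwz => ?_
  have hmin : IsLocalMin w z := by
    filter_upwards [Iio_mem_nhds hz] with y hy
    simpa [hwz] using hnonneg y (le_of_lt hy)
  have hderiv := hmin.hasDerivAt_eq_zero (h.hasDerivAt_snd z)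
  rw [hwz, mul_zero, add_zero] at hderiv
  exact (hF z hz.le).ne' hderiv

/-! ### Homoclinic orbits of bistable Liénard equations -/

variable {a b d : ℝ}

theorem left_lt_of_HO (h : IsLienardSolution I F G u w) (hI : IsOpen I)
    (hF : DifferentiableOn ℝ F I) (hG : ContinuousOn G I) (hbi : IsBistable I F a b d)
    (hHO : HO a u w) (z : ℝ) : a < u z := by
  have hge : ∀ z, a ≤ u z := by
    by_contra! ⟨z, hz⟩
    obtain ⟨x, hx⟩ := h.continuous_fst.exists_forall_le' z
      (hHO.tendsto_cocompact.eventually_const_le hz)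
    exact (hbi.neg_of_lt _ (h.mem x) ((hx z).trans_lt hz)).not_ge
      (h.force_nonneg_of_isLocalMin (Eventually.of_forall hx))
  have ⟨_, _, _, _, hne⟩ := hHO
  refine (hge z).lt_of_ne' fun hz => hne ?_
  have hmin : IsLocalMin u z := Eventually.of_forall fun y => hz.trans_le (hge y)
  exact h.eq_equilibrium hI hF hG hbi.left_eq_zero hz
    (hmin.hasDerivAt_eq_zero (h.hasDerivAt_fst z))

theorem lt_right_of_HO (h : IsLienardSolution I F G u w) (hI : IsOpen I)
    (hF : DifferentiableOn ℝ F I) (hG : ContinuousOn G I) (hbi : IsBistable I F a b d)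
    (hHO : HO a u w) (z : ℝ) : u z < d := by
  obtain ⟨x, hx⟩ := h.continuous_fst.exists_forall_ge' z
    (hHO.tendsto_cocompact.eventually_le_const (h.left_lt_of_HO hI hF hG hbi hHO z))
  have hmax : IsLocalMax u x := Eventually.of_forall hx
  refine (hx z).trans_lt (lt_of_le_of_ne ?_ fun hxd => ?_)
  · by_contra! hlt
    exact (hbi.pos_of_gt _ (h.mem x) hlt).not_ge (h.force_nonpos_of_isLocalMax hmax)
  · have hconst : u = fun _ => d := funext fun y => (h.eq_equilibrium hI hF hG
      hbi.right_eq_zero hxd (hmax.hasDerivAt_eq_zero (h.hasDerivAt_fst x)) y).1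
    have had : d = a := tendsto_nhds_unique (hconst ▸ tendsto_const_nhds) hHO.1
    exact (hbi.left_lt.trans hbi.lt_right).ne' had

theorem exists_snd_eq_zero_of_HO (h : IsLienardSolution I F G u w) (hl : ∀ z, a < u z)
    (hHO : HO a u w) : ∃ x, w x = 0 := by
  obtain ⟨x, hx⟩ := h.continuous_fst.exists_forall_ge' 0
    (hHO.tendsto_cocompact.eventually_le_const (hl 0))
  have hmax : IsLocalMax u x := Eventually.of_forall hx
  exact ⟨x, hmax.hasDerivAt_eq_zero (h.hasDerivAt_fst x)⟩

/-- Synchronising the two times by `U ∘ s = u` makes `w - W ∘ s` the vertical distance in the phase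
plane between the two orbits. -/
theorem hasDerivAt_gap {Gb U W s : ℝ → ℝ} (h : IsLienardSolution I F G u w)
    (hb : IsLienardSolution I F Gb U W) (hW : ∀ z, 0 < W z) (hs : ∀ z, U (s z) = u z)
    (hs' : ∀ z, HasDerivAt s (w z / W (s z)) z) (z : ℝ) :
    HasDerivAt (fun z => w z - W (s z))
      ((G (u z) - Gb (u z)) * w z - F (u z) / W (s z) * (w z - W (s z))) z := by
  refine ((h.hasDerivAt_snd z).sub ((hb.hasDerivAt_snd (s z)).comp z (hs' z))).congr_deriv ?_
  have := (hW (s z)).ne'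
  rw [hs]
  field_simp
  ring

theorem eventually_snd_pos_of_HO (h : IsLienardSolution I F G u w) (hbi : IsBistable I F a b d)
    (hl : ∀ z, a < u z) (hHO : HO a u w) : ∀ᶠ z in atBot, 0 < w z := by
  obtain ⟨Z, hZ⟩ := eventually_atBot.1 (hHO.1.eventually_lt_const hbi.left_lt)
  filter_upwards [eventually_lt_atBot Z] with z hz
  exact h.snd_pos_of_tendsto_atBot hHO.1 hl
    (fun z hz => hbi.pos_of_mem_Ioo _ ⟨hl z, hZ z hz⟩) z hz

theorem not_HO_left_of_HE1 {Gb U W : ℝ → ℝ} (h : IsLienardSolution I F G u w)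
    (hI : IsOpen I) (hF : DifferentiableOn ℝ F I) (hG : ContinuousOn G I)
    (hbi : IsBistable I F a b d) (hb : IsLienardSolution I F Gb U W) (hHE : HE1 a d U W)
    (hle : ∀ x ∈ I, Gb x ≤ G x) : ¬HO a u w := by
  intro hHO
  have ⟨hubot, _, hwbot, _, _⟩ := hHO
  obtain ⟨hUbot, hUtop, hWbot, -, hW⟩ := hHE
  have hl : ∀ z, a < u z := h.left_lt_of_HO hI hF hG hbi hHO
  have hr : ∀ z, u z < d := h.lt_right_of_HO hI hF hG hbi hHO
  obtain ⟨x, hx⟩ := h.exists_snd_eq_zero_of_HO hl hHO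
  obtain ⟨t, hwt, hw⟩ :=
    exists_first_zero h.continuous_snd (h.eventually_snd_pos_of_HO hbi hl hHO) hx
  obtain ⟨s, hs, hs', hsbot⟩ := exists_reparametrization h.hasDerivAt_fst
    (fun z => ⟨hl z, hr z⟩) hubot hb.hasDerivAt_fst hW hUbot hUtop
  have hs_cont : Continuous s := continuous_iff_continuousAt.2 fun z => (hs' z).continuousAt
  have hk : Continuous fun z => F (u z) / W (s z) :=
    (hF.continuousOn.comp_continuous h.continuous_fst h.mem).div
      (hb.continuous_snd.comp hs_cont) fun z => (hW (s z)).ne'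
  have hk_bot : ∀ᶠ z in atBot, 0 ≤ F (u z) / W (s z) := by
    filter_upwards [hubot.eventually_lt_const hbi.left_lt] with z hz
    exact (div_pos (hbi.pos_of_mem_Ioo _ ⟨hl z, hz⟩) (hW _)).le
  have hgap_bot : Tendsto (fun z => w z - W (s z)) atBot (𝓝 0) := by
    simpa using hwbot.sub (hWbot.comp hsbot)
  have hgap : 0 ≤ w t - W (s t) := by
    refine nonneg_of_deriv_add_mul_nonneg (D := fun z => w z - W (s z)) hk hk_bot
      (h.hasDerivAt_gap hb hW hs hs') (fun z hz => ?_) hgap_bot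
    simpa using mul_nonneg (sub_nonneg.2 (hle _ (h.mem z))) (hw z hz).le
  linarith [hW (s t)]

theorem not_HO_left_of_HE2 {Gf U W : ℝ → ℝ} (h : IsLienardSolution I F G u w)
    (hI : IsOpen I) (hF : DifferentiableOn ℝ F I) (hG : ContinuousOn G I)
    (hbi : IsBistable I F a b d) (hf : IsLienardSolution I F Gf U W) (hHE : HE2 a d U W)
    (hle : ∀ x ∈ I, G x ≤ Gf x) : ¬HO a u w := fun hHO =>
  h.reverse.not_HO_left_of_HE1 hI hF hG.neg hbi hf.reverse hHE.reverse
    (fun x hx => neg_le_neg (hle x hx)) hHO.reverse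

theorem not_HO_right_of_HE2 {Gf U W : ℝ → ℝ} (h : IsLienardSolution I F G u w)
    (hI : IsOpen I) (hF : DifferentiableOn ℝ F I) (hG : ContinuousOn G I)
    (hbi : IsBistable I F a b d) (hf : IsLienardSolution I F Gf U W) (hHE : HE2 a d U W)
    (hle : ∀ x ∈ I, Gf x ≤ G x) : ¬HO d u w := fun hHO =>
  h.reflect.not_HO_left_of_HE1 hI.neg (hF.comp differentiableOn_id.neg fun _ hx => hx).neg
    (hG.comp continuousOn_neg fun _ hx => hx) hbi.reflect hf.reflect hHE.reflect
    (fun x hx => hle (-x) hx) hHO.reflect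

theorem not_HO_right_of_HE1 {Gb U W : ℝ → ℝ} (h : IsLienardSolution I F G u w)
    (hI : IsOpen I) (hF : DifferentiableOn ℝ F I) (hG : ContinuousOn G I)
    (hbi : IsBistable I F a b d) (hb : IsLienardSolution I F Gb U W) (hHE : HE1 a d U W)
    (hle : ∀ x ∈ I, G x ≤ Gb x) : ¬HO d u w := fun hHO =>
  h.reflect.not_HO_left_of_HE2 hI.neg (hF.comp differentiableOn_id.neg fun _ hx => hx).neg
    (hG.comp continuousOn_neg fun _ hx => hx) hbi.reflect hb.reflect hHE.reflect
    (fun x hx => hle (-x) hx) hHO.reflect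

end IsLienardSolution

/-! ### The traveling-wave system -/

section TravelingWave

variable {V V' V'' κ uMx umx : ℝ → ℝ} {τ UM K c u1 u0 u2 : ℝ}

theorem hasDerivAt_fTV {x : ℝ} (hV : HasDerivAt V (V' x) x) :
    HasDerivAt (fTV V K c) (fdTV V' K x) x :=
  ((((hasDerivAt_id x).const_mul K).sub hV).sub_const c).div_const K |>.congr_deriv
    (by rw [mul_one, fdTV])

theorem tendsto_fTV_atTop (hV : ∀ᶠ x in atTop, HasDerivAt V (V' x) x)
    (hV' : Tendsto V' atTop (𝓝 0)) (hK : 0 < K) : Tendsto (fTV V K c) atTop atTop := by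
  have hf' : Tendsto (fdTV V' K) atTop (𝓝 ((K - 0) / K)) := (hV'.const_sub K).div_const K
  rw [sub_zero, div_self hK.ne'] at hf'
  exact tendsto_atTop_of_le_deriv one_half_pos (hV.mono fun _ hx => hasDerivAt_fTV hx)
    (hf'.eventually_const_le one_half_lt_one)

theorem A1.hasDerivAt (hA1 : A1 V V' V'' UM) {x : ℝ} (hx : 0 < x) : HasDerivAt V (V' x) x :=
  (hA1.1 x hx.le).hasDerivAt (Ici_mem_nhds hx)

theorem A1.deriv_zero_nonneg (hA1 : A1 V V' V'' UM) : 0 ≤ V' 0 := by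
  obtain ⟨-, hV', -, -, hpos, -⟩ := hA1
  refine ge_of_tendsto ((hV' 0 self_mem_Ici).mono Ioi_subset_Ici_self) ?_
  filter_upwards [self_mem_nhdsWithin] with x hx using (hpos x hx).le

theorem isBistable_fTV (hA1 : A1 V V' V'' UM) (huMx : UMaxHyp V' UM uMx)
    (humx : UMinHyp V' UM umx) (hD1 : (K, c) ∈ D1 V V' UM uMx umx)
    (hz : ZerosD1 V K c u1 u0 u2) : IsBistable (Ioi 0) (fTV V K c) u1 u0 u2 := by
  have ⟨hVderiv, _, _, _, _, _, hV'top, _⟩ := hA1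
  obtain ⟨hK0, hKM, hc1, hcM⟩ := hD1
  obtain ⟨hc0, hcm⟩ := max_lt_iff.1 hc1
  obtain ⟨-, h10, h02, -, -, -, hzero⟩ := hz
  have hK : 0 < K := hA1.deriv_zero_nonneg.trans_lt hK0
  have huM : uMx K ∈ Ioo 0 UM := (huMx K hK0 hKM).1
  have hum : UM < umx K := (humx K hK hKM).1
  have hV : ContinuousOn V (Ici 0) := fun x hx => (hVderiv x hx).continuousWithinAt
  have hf : ContinuousOn (fTV V K c) (Ici 0) := by unfold fTV; fun_prop
  have htop : Tendsto (fTV V K c) atTop atTop :=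
    tendsto_fTV_atTop ((eventually_gt_atTop 0).mono fun _ => hA1.hasDerivAt) hV'top hK
  obtain ⟨r, hr, hfr⟩ :=
    ((eventually_gt_atTop (umx K)).and (htop.eventually_gt_atTop 0)).exists
  have hf0 : fTV V K c 0 < 0 :=
    div_neg_of_neg_of_pos (by simp only [c0v] at hc0; linarith) hK
  have hfM : 0 < fTV V K c (uMx K) := div_pos (sub_pos.2 hcM) hK
  have hfm : fTV V K c (umx K) < 0 := div_neg_of_neg_of_pos (sub_neg.2 hcm) hK
  exact isBistable_of_sign_changes hf huM.1 (huM.2.trans hum) hr hf0 hfM hfm hfr h10 h02 hzero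

theorem A2.pos_one_div (hκ : A2 κ) {x : ℝ} (hx : 0 < x) : 0 < κ (1 / x) :=
  hκ.2 _ (one_div_pos.2 hx)

theorem A2.differentiableOn_one_div (hκ : A2 κ) :
    DifferentiableOn ℝ (fun x => κ (1 / x)) (Ioi 0) :=
  (hκ.1.differentiableOn one_ne_zero).comp
    ((differentiableOn_const 1).div differentiableOn_id fun _ hx => ne_of_gt hx)
    fun _ hx => mem_Ioi.2 (one_div_pos.2 hx)

theorem g1TV_pos (hκ : A2 κ) (hτ : 0 < τ) {x : ℝ} (hx : 0 < x) : 0 < g1TV κ τ x :=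
  one_div_pos.2 (mul_pos hτ (hκ.pos_one_div hx))

theorem g2TV_pos (hκ : A2 κ) (hτ : 0 < τ) {x : ℝ} (hx : 0 < x) : 0 < g2TV κ τ x :=
  div_pos hx (mul_pos (mul_pos two_pos hτ) (hκ.pos_one_div hx))

theorem differentiableOn_g1TV (hκ : A2 κ) (hτ : τ ≠ 0) :
    DifferentiableOn ℝ (g1TV κ τ) (Ioi 0) :=
  (differentiableOn_const 1).div (hκ.differentiableOn_one_div.const_mul τ)
    fun _ hx => mul_ne_zero hτ (hκ.pos_one_div hx).ne'

theorem differentiableOn_g2TV (hκ : A2 κ) (hτ : τ ≠ 0) :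
    DifferentiableOn ℝ (g2TV κ τ) (Ioi 0) :=
  differentiableOn_id.div (hκ.differentiableOn_one_div.const_mul (2 * τ))
    fun _ hx => mul_ne_zero (mul_ne_zero two_ne_zero hτ) (hκ.pos_one_div hx).ne'

theorem continuousOn_hTV {s : Set ℝ} (hV' : ContinuousOn V' s) (μ : ℝ) :
    ContinuousOn (hTV V' K μ) s := by
  unfold hTV fdTV
  fun_prop

theorem IsTVSol.isLienardSolution {μ : ℝ} {u w : ℝ → ℝ} (h : IsTVSol V V' κ τ K c μ u w)
    (hu : ∀ z, 0 < u z) :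
    IsLienardSolution (Ioi 0) (fun x => g1TV κ τ x * fTV V K c x)
      (fun x => g2TV κ τ x * hTV V' K μ x) u w :=
  ⟨hu, h.1, h.2⟩

end TravelingWave

theorem stmt3_general {V V' κ : ℝ → ℝ} {τ K c u1 u0 u2 μb μf : ℝ}
    (hV : ∀ u, 0 < u → HasDerivAt V (V' u) u)
    (hV' : ContinuousOn V' (Ioi 0)) (hκ : A2 κ) (hτ : 0 < τ)
    (hf : IsBistable (Ioi 0) (fTV V K c) u1 u0 u2)
    (hμb : HasHE1 V V' κ τ K c μb u1 u2) (hμf : HasHE2 V V' κ τ K c μf u1 u2) :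
    (μb ≤ μf → ∀ μ : ℝ, ¬ HasHO V V' κ τ K c μ u1) ∧
    (μf ≤ μb → ∀ μ : ℝ, ¬ HasHO V V' κ τ K c μ u2) := by
  obtain ⟨Ub, Wb, hb, hUb, hHEb⟩ := hμb
  obtain ⟨Uf, Wf, hfr, hUf, hHEf⟩ := hμf
  have hb := hb.isLienardSolution hUb
  have hfr := hfr.isLienardSolution hUf
  have hF : DifferentiableOn ℝ (fun x => g1TV κ τ x * fTV V K c x) (Ioi 0) :=
    (differentiableOn_g1TV hκ hτ.ne').mul fun x hx =>
      (hasDerivAt_fTV (hV x hx)).differentiableAt.differentiableWithinAt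
  have hG (μ : ℝ) : ContinuousOn (fun x => g2TV κ τ x * hTV V' K μ x) (Ioi 0) :=
    (differentiableOn_g2TV hκ hτ.ne').continuousOn.mul (continuousOn_hTV hV' μ)
  have hbi := hf.pos_mul fun x hx => g1TV_pos hκ hτ hx
  have hmono {μ ν : ℝ} (hμν : μ ≤ ν) :
      ∀ x ∈ Ioi 0, g2TV κ τ x * hTV V' K μ x ≤ g2TV κ τ x * hTV V' K ν x := fun x hx =>
    mul_le_mul_of_nonneg_left (add_le_add_right hμν _) (g2TV_pos hκ hτ hx).le
  refine ⟨fun hle μ ⟨u, w, huw, hu, hHO⟩ => ?_, fun hle μ ⟨u, w, huw, hu, hHO⟩ => ?_⟩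
  · have h := huw.isLienardSolution hu
    rcases le_total μb μ with hμ | hμ
    · exact h.not_HO_left_of_HE1 isOpen_Ioi hF (hG μ) hbi hb hHEb (hmono hμ) hHO
    · exact h.not_HO_left_of_HE2 isOpen_Ioi hF (hG μ) hbi hfr hHEf (hmono (hμ.trans hle)) hHO
  · have h := huw.isLienardSolution hu
    rcases le_total μf μ with hμ | hμ
    · exact h.not_HO_right_of_HE2 isOpen_Ioi hF (hG μ) hbi hfr hHEf (hmono hμ) hHO
    · exact h.not_HO_right_of_HE1 isOpen_Ioi hF (hG μ) hbi hb hHEb (hmono (hμ.trans hle)) hHO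

theorem stmt3
    (V V' V'' κ : ℝ → ℝ) (τ UM K c K₁ : ℝ) (uMx umx : ℝ → ℝ)
    (hA1 : A1 V V' V'' UM) (hA2 : A2 κ) (hτ : 0 < τ) (hK : K ≠ 0)
    (huMx : UMaxHyp V' UM uMx) (humx : UMinHyp V' UM umx)
    (hK1 : K1Hyp V V' UM umx K₁)
    (hC : CondC V' κ UM K₁ K)
    (hD1 : (K, c) ∈ D1 V V' UM uMx umx)
    (u1 u0 u2 μb μf : ℝ) (hz : ZerosD1 V K c u1 u0 u2)
    (hμb : ∀ μ : ℝ, HasHE1 V V' κ τ K c μ u1 u2 ↔ μ = μb)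
    (hμf : ∀ μ : ℝ, HasHE2 V V' κ τ K c μ u1 u2 ↔ μ = μf) :
    (μb ≤ μf → ∀ μ : ℝ, ¬ HasHO V V' κ τ K c μ u1) ∧
    (μf ≤ μb → ∀ μ : ℝ, ¬ HasHO V V' κ τ K c μ u2) :=
  stmt3_general (fun _ => hA1.hasDerivAt) (hA1.2.1.mono Ioi_subset_Ici_self) hA2 hτ
    (isBistable_fTV hA1 huMx humx hD1 hz) ((hμb μb).2 rfl) ((hμf μf).2 rfl)

end TrafficTW
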